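/- Suppose that in degree k the spaces H^k_∂, H^k_A, H^k_BC, A^k, B^k, C^k, D^k, E^k, F^k are finite-dimensional. Then dim H^k_A + dim D^k = dim H^k_∂ + dim A^k + dim E^k, and dim H^k_BC + dim C^k = dim H^k_∂ + dim B^k + dim F^k (the versions of the Varouchas dimension identities obtained by interchanging the roles of ∂ and ∂̄). -/

import Mathlib

open Submodule LinearMap Module

section Setup

variable (U : ℤ → Type*) [∀ k, AddCommGroup (U k)] [∀ k, Module ℂ (U k)]

/-- The identification `U a → U b` induced by an equality `a = b` of degrees. -/
def castU {a b : ℤ} (h : a = b) : U a →ₗ[ℂ] U b := by subst h; exact LinearMap.id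

variable (D : ∀ k : ℤ, U k →ₗ[ℂ] U (k + 1)) (Db : ∀ k : ℤ, U k →ₗ[ℂ] U (k - 1))

/-- The composite `∂∂̄ : U^k → U^{k-1} → U^k`. -/
def ddbar (k : ℤ) : U k →ₗ[ℂ] U k :=
  (castU U (show k - 1 + 1 = k by ring)).comp ((D (k - 1)).comp (Db k))

/-- `ker ∂ ∩ U^k` -/
def kerD (k : ℤ) : Submodule ℂ (U k) := LinearMap.ker (D k)

/-- `ker ∂̄ ∩ U^k` -/
def kerDb (k : ℤ) : Submodule ℂ (U k) := LinearMap.ker (Db k)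

/-- `∂(U^{k-1})` -/
def imD (k : ℤ) : Submodule ℂ (U k) :=
  LinearMap.range ((castU U (show k - 1 + 1 = k by ring)).comp (D (k - 1)))

/-- `∂̄(U^{k+1})` -/
def imDb (k : ℤ) : Submodule ℂ (U k) :=
  LinearMap.range ((castU U (show k + 1 - 1 = k by ring)).comp (Db (k + 1)))

/-- `ker (∂∂̄) ∩ U^k` -/
def kerDDbar (k : ℤ) : Submodule ℂ (U k) := LinearMap.ker (ddbar U D Db k)

/-- `(∂∂̄)(U^k)` -/
def imDDbar (k : ℤ) : Submodule ℂ (U k) := LinearMap.range (ddbar U D Db k)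

end Setup

/-- The quotient of a submodule `p` by (the preimage in `p` of) a submodule `q`. -/
abbrev SubQuot {V : Type*} [AddCommGroup V] [Module ℂ V] (p q : Submodule ℂ V) :=
  ↥p ⧸ q.comap p.subtype

/-- The map `p/q → p'/q'` induced by the identity (inclusion) on representatives. -/
def qmap {V : Type*} [AddCommGroup V] [Module ℂ V] {p p' q q' : Submodule ℂ V}
    (hp : p ≤ p') (hq : q ≤ q') : SubQuot p q →ₗ[ℂ] SubQuot p' q' :=
  Submodule.mapQ _ _ (Submodule.inclusion hp) fun x hx => by
    simp only [Submodule.mem_comap, Submodule.subtype_apply, Submodule.coe_inclusion] at hx ⊢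
    exact hq hx

section Cohomology

variable (U : ℤ → Type*) [∀ k, AddCommGroup (U k)] [∀ k, Module ℂ (U k)]
variable (D : ∀ k : ℤ, U k →ₗ[ℂ] U (k + 1)) (Db : ∀ k : ℤ, U k →ₗ[ℂ] U (k - 1))

/-- `H^k_∂ = (ker ∂ ∩ U^k)/∂(U^{k-1})` -/
abbrev Hd (k : ℤ) := SubQuot (kerD U D k) (imD U D k)

/-- `H^k_∂̄ = (ker ∂̄ ∩ U^k)/∂̄(U^{k+1})` -/
abbrev Hdb (k : ℤ) := SubQuot (kerDb U Db k) (imDb U Db k)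

/-- `H^k_BC = (ker ∂ ∩ ker ∂̄ ∩ U^k)/(∂∂̄)(U^k)` -/
abbrev HBC (k : ℤ) := SubQuot (kerD U D k ⊓ kerDb U Db k) (imDDbar U D Db k)

/-- `H^k_A = (ker (∂∂̄) ∩ U^k)/(∂(U^{k-1}) + ∂̄(U^{k+1}))` -/
abbrev HA (k : ℤ) := SubQuot (kerDDbar U D Db k) (imD U D k ⊔ imDb U Db k)

/-- `A^k = (∂(U^{k-1}) ∩ ∂̄(U^{k+1}))/(∂∂̄)(U^k)` -/
abbrev Avar (k : ℤ) := SubQuot (imD U D k ⊓ imDb U Db k) (imDDbar U D Db k)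

/-- `B^k = (ker ∂̄ ∩ ∂(U^{k-1}))/(∂∂̄)(U^k)` -/
abbrev Bvar (k : ℤ) := SubQuot (kerDb U Db k ⊓ imD U D k) (imDDbar U D Db k)

/-- `C^k = (ker (∂∂̄) ∩ U^k)/((ker ∂̄ ∩ U^k) + ∂(U^{k-1}))` -/
abbrev Cvar (k : ℤ) := SubQuot (kerDDbar U D Db k) (kerDb U Db k ⊔ imD U D k)

/-- `D^k = (ker ∂ ∩ ∂̄(U^{k+1}))/(∂∂̄)(U^k)` -/
abbrev Dvar (k : ℤ) := SubQuot (kerD U D k ⊓ imDb U Db k) (imDDbar U D Db k)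

/-- `E^k = (ker (∂∂̄) ∩ U^k)/((ker ∂ ∩ U^k) + ∂̄(U^{k+1}))` -/
abbrev Evar (k : ℤ) := SubQuot (kerDDbar U D Db k) (kerD U D k ⊔ imDb U Db k)

/-- `F^k = (ker (∂∂̄) ∩ U^k)/((ker ∂ ∩ U^k) + (ker ∂̄ ∩ U^k))` -/
abbrev Fvar (k : ℤ) := SubQuot (kerDDbar U D Db k) (kerD U D k ⊔ kerDb U Db k)

end Cohomology

/-!
Fix a degree and write `K = ker ∂`, `I = im ∂`, `W = im ∂∂̄`, `Z = ker ∂∂̄`. For any submodule `L`,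
the cohomology `K/I` is filtered by the image of `K ⊓ L`, with graded pieces `(K ⊓ L)/(I ⊓ L)` and
`(K ⊔ L)/(I ⊔ L)` by the modular law. The first piece is the quotient of `(K ⊓ L)/W` by
`(I ⊓ L)/W`, the second is the kernel of `Z/(I ⊔ L) → Z/(K ⊔ L)`, so comparing dimensions gives one
identity for every `L` with `W ≤ I ⊓ L` and `K ⊔ L ≤ Z`. The two Varouchas identities are the cases
`L = im ∂̄` and `L = ker ∂̄`.
-/

section SubquotientRank

universe u

variable {R : Type*} {M : Type u} [Ring R] [AddCommGroup M] [Module R M]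

/-- The dimension of the subquotient `p/(p ∩ q)`, as a cardinal; it is `dim p/q` when `q ≤ p`. The
submodule `q` is not required to lie in `p`, as for `SubQuot`, whose rank this is over `ℂ`. -/
noncomputable def subquotientRank (p q : Submodule R M) : Cardinal :=
  Module.rank R (p ⧸ q.submoduleOf p)

theorem subquotientRank_self_inf (p q : Submodule R M) :
    subquotientRank p (p ⊓ q) = subquotientRank p q := by
  rw [subquotientRank, submoduleOf, comap_inf, comap_subtype_self, top_inf_eq]
  rfl

theorem subquotientRank_sup_left (p q : Submodule R M) :
    subquotientRank (p ⊔ q) q = subquotientRank p q := by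
  rw [← subquotientRank_self_inf p q]
  exact (quotientInfEquivSupQuotient p q).rank_eq.symm

variable [HasRankNullity.{u} R]

theorem subquotientRank_add_subquotientRank {p q r : Submodule R M} (hqp : q ≤ p) (hrq : r ≤ q) :
    subquotientRank p q + subquotientRank q r = subquotientRank p r := by
  have hle : r.submoduleOf p ≤ q.submoduleOf p := comap_mono hrq
  let g : q →ₗ[R] p ⧸ r.submoduleOf p := (r.submoduleOf p).mkQ ∘ₗ inclusion hqp
  have hker : ker g = r.submoduleOf q := by
    rw [ker_comp, ker_mkQ]
    rfl
  have hrange : range g = (q.submoduleOf p).map (r.submoduleOf p).mkQ := by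
    rw [range_comp, range_inclusion]
    rfl
  have hsub : subquotientRank q r =
      Module.rank R ((q.submoduleOf p).map (r.submoduleOf p).mkQ) := by
    rw [subquotientRank, ← hker, ← hrange]
    exact g.quotKerEquivRange.rank_eq
  rw [hsub, subquotientRank, ← (quotientQuotientEquivQuotient _ _ hle).rank_eq]
  exact rank_quotient_add_rank _

theorem subquotientRank_sup_add_subquotientRank_inf {K I : Submodule R M} (hIK : I ≤ K)
    (L : Submodule R M) :
    subquotientRank (K ⊔ L) (I ⊔ L) + subquotientRank (K ⊓ L) (I ⊓ L) = subquotientRank K I := by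
  have hsup : subquotientRank (K ⊔ L) (I ⊔ L) = subquotientRank K (K ⊓ (I ⊔ L)) := calc
    subquotientRank (K ⊔ L) (I ⊔ L) = subquotientRank (K ⊔ (I ⊔ L)) (I ⊔ L) := by
      rw [← sup_assoc, sup_eq_left.2 hIK]
    _ = subquotientRank K (I ⊔ L) := subquotientRank_sup_left _ _
    _ = subquotientRank K (K ⊓ (I ⊔ L)) := (subquotientRank_self_inf _ _).symm
  have hinf : subquotientRank (K ⊓ L) (I ⊓ L) = subquotientRank (K ⊓ (I ⊔ L)) I := calc
    subquotientRank (K ⊓ L) (I ⊓ L) = subquotientRank (K ⊓ L) (K ⊓ L ⊓ I) := by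
      rw [inf_right_comm, inf_eq_right.2 hIK]
    _ = subquotientRank (K ⊓ L) I := subquotientRank_self_inf _ _
    _ = subquotientRank (K ⊓ L ⊔ I) I := (subquotientRank_sup_left _ _).symm
    _ = subquotientRank (K ⊓ (I ⊔ L)) I := by
      rw [inf_comm K (I ⊔ L), sup_inf_assoc_of_le L hIK, sup_comm, inf_comm]
  rw [hsup, hinf]
  exact subquotientRank_add_subquotientRank inf_le_left (le_inf hIK le_sup_left)

theorem subquotientRank_varouchas {K I L W Z : Submodule R M} (hIK : I ≤ K) (hW : W ≤ I ⊓ L)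
    (hZ : K ⊔ L ≤ Z) :
    subquotientRank Z (I ⊔ L) + subquotientRank (K ⊓ L) W =
      subquotientRank K I + subquotientRank (I ⊓ L) W + subquotientRank Z (K ⊔ L) := by
  rw [← subquotientRank_add_subquotientRank hZ (sup_le_sup_right hIK L),
    ← subquotientRank_add_subquotientRank (inf_le_inf_right L hIK) hW,
    ← subquotientRank_sup_add_subquotientRank_inf hIK L]
  ring

end SubquotientRank

section GradedComplex

variable {U : ℤ → Type*} [∀ k, AddCommGroup (U k)] [∀ k, Module ℂ (U k)]

theorem castU_mem_ker {W : ℤ → Type*} [∀ k, AddCommGroup (W k)] [∀ k, Module ℂ (W k)]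
    (f : ∀ k, U k →ₗ[ℂ] W k) {a b : ℤ} (h : a = b) {x : U a} (hx : x ∈ ker (f a)) :
    castU U h x ∈ ker (f b) := by
  subst h
  exact hx

variable {D : ∀ k : ℤ, U k →ₗ[ℂ] U (k + 1)} {Db : ∀ k : ℤ, U k →ₗ[ℂ] U (k - 1)}

theorem imD_le_kerD (hD2 : ∀ k : ℤ, (D (k + 1)).comp (D k) = 0) (k : ℤ) :
    imD U D k ≤ kerD U D k := by
  rintro _ ⟨x, rfl⟩
  exact castU_mem_ker D _ (LinearMap.congr_fun (hD2 (k - 1)) x)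

theorem imDb_le_kerDb (hDb2 : ∀ k : ℤ, (Db (k - 1)).comp (Db k) = 0) (k : ℤ) :
    imDb U Db k ≤ kerDb U Db k := by
  rintro _ ⟨x, rfl⟩
  exact castU_mem_ker Db _ (LinearMap.congr_fun (hDb2 (k + 1)) x)

theorem imDDbar_le_imD (k : ℤ) : imDDbar U D Db k ≤ imD U D k :=
  range_comp_le_range (Db k) ((castU U _).comp (D (k - 1)))

theorem kerDb_le_kerDDbar (k : ℤ) : kerDb U Db k ≤ kerDDbar U D Db k :=
  ker_le_ker_comp (Db k) ((castU U _).comp (D (k - 1)))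

theorem imDDbar_le_imDb {k : ℤ} (hanti : ddbar U D Db k
      + (castU U (show k + 1 - 1 = k by ring)).comp ((Db (k + 1)).comp (D k)) = 0) :
    imDDbar U D Db k ≤ imDb U Db k := by
  rw [imDDbar, eq_neg_of_add_eq_zero_left hanti, range_neg]
  exact range_comp_le_range (D k) ((castU U _).comp (Db (k + 1)))

theorem kerD_le_kerDDbar {k : ℤ} (hanti : ddbar U D Db k
      + (castU U (show k + 1 - 1 = k by ring)).comp ((Db (k + 1)).comp (D k)) = 0) :
    kerD U D k ≤ kerDDbar U D Db k := by
  rw [kerDDbar, eq_neg_of_add_eq_zero_left hanti, ker_neg]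
  exact ker_le_ker_comp (D k) ((castU U _).comp (Db (k + 1)))

end GradedComplex

theorem varouchas_dim_identities_interchanged_general
    (U : ℤ → Type*) [∀ k, AddCommGroup (U k)] [∀ k, Module ℂ (U k)]
    (D : ∀ k : ℤ, U k →ₗ[ℂ] U (k + 1)) (Db : ∀ k : ℤ, U k →ₗ[ℂ] U (k - 1))
    (hD2 : ∀ k : ℤ, (D (k + 1)).comp (D k) = 0)
    (hDb2 : ∀ k : ℤ, (Db (k - 1)).comp (Db k) = 0)
    (hanti : ∀ k : ℤ, ddbar U D Db k
      + (castU U (show k + 1 - 1 = k by ring)).comp ((Db (k + 1)).comp (D k)) = 0)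
    (k : ℤ) :
    (Module.rank ℂ (HA U D Db k) + Module.rank ℂ (Dvar U D Db k)
       = Module.rank ℂ (Hd U D k) + Module.rank ℂ (Avar U D Db k)
          + Module.rank ℂ (Evar U D Db k)) ∧
    (Module.rank ℂ (HBC U D Db k) + Module.rank ℂ (Cvar U D Db k)
       = Module.rank ℂ (Hd U D k) + Module.rank ℂ (Bvar U D Db k)
          + Module.rank ℂ (Fvar U D Db k)) := by
  have hIK := imD_le_kerD hD2 k
  have hIKb := imDb_le_kerDb hDb2 k
  have hWI := imDDbar_le_imD (D := D) (Db := Db) k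
  have hWIb := imDDbar_le_imDb (hanti k)
  have hKZ := kerD_le_kerDDbar (hanti k)
  have hKbZ := kerDb_le_kerDDbar (D := D) (Db := Db) k
  constructor
  · exact subquotientRank_varouchas hIK (le_inf hWI hWIb) (sup_le hKZ (hIKb.trans hKbZ))
  · have h := subquotientRank_varouchas hIK (le_inf hWI (hWIb.trans hIKb)) (sup_le hKZ hKbZ)
    rw [inf_comm (imD U D k), sup_comm (imD U D k), add_comm] at h
    exact h

/-- the Varouchas dimension identities with the roles of `∂` and `∂̄`
interchanged: `dim H^k_A + dim D^k = dim H^k_∂ + dim A^k + dim E^k` and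
`dim H^k_BC + dim C^k = dim H^k_∂ + dim B^k + dim F^k`. -/
theorem varouchas_dim_identities_interchanged
    (n : ℕ) (U : ℤ → Type*) [∀ k, AddCommGroup (U k)] [∀ k, Module ℂ (U k)]
    (hvan : ∀ k : ℤ, (n : ℤ) < |k| → ∀ x : U k, x = 0)
    (D : ∀ k : ℤ, U k →ₗ[ℂ] U (k + 1)) (Db : ∀ k : ℤ, U k →ₗ[ℂ] U (k - 1))
    (hD2 : ∀ k : ℤ, (D (k + 1)).comp (D k) = 0)
    (hDb2 : ∀ k : ℤ, (Db (k - 1)).comp (Db k) = 0)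
    (hanti : ∀ k : ℤ, ddbar U D Db k
      + (castU U (show k + 1 - 1 = k by ring)).comp ((Db (k + 1)).comp (D k)) = 0)
    (k : ℤ)
    (h1 : FiniteDimensional ℂ (Hd U D k))
    (h2 : FiniteDimensional ℂ (HA U D Db k))
    (h3 : FiniteDimensional ℂ (HBC U D Db k))
    (h4 : FiniteDimensional ℂ (Avar U D Db k))
    (h5 : FiniteDimensional ℂ (Bvar U D Db k))
    (h6 : FiniteDimensional ℂ (Cvar U D Db k))
    (h7 : FiniteDimensional ℂ (Dvar U D Db k))
    (h8 : FiniteDimensional ℂ (Evar U D Db k))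
    (h9 : FiniteDimensional ℂ (Fvar U D Db k)) :
    (finrank ℂ (HA U D Db k) + finrank ℂ (Dvar U D Db k)
       = finrank ℂ (Hd U D k) + finrank ℂ (Avar U D Db k) + finrank ℂ (Evar U D Db k)) ∧
    (finrank ℂ (HBC U D Db k) + finrank ℂ (Cvar U D Db k)
       = finrank ℂ (Hd U D k) + finrank ℂ (Bvar U D Db k) + finrank ℂ (Fvar U D Db k)) := by
  have h := varouchas_dim_identities_interchanged_general U D Db hD2 hDb2 hanti k
  simpa only [← finrank_eq_rank, ← Nat.cast_add, Nat.cast_inj] using h
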